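/- Let μ be a probability mass function on T₁ with 0 < β := Σ_τ μ(τ)·deg(τ) < ∞, let η₁ be the law on T₁ with degree distribution Q and i.i.d. marks, where Q has finite nonzero mean, and assume μ is absolutely continuous with respect to η₁. Then the double sum Σ_{(x,m)∈T₁} μ(x,m) · Σ_{(a,y,y′)∈m} log( μ̄^{1,o}((a,y),(x,y′)) / η̄₁^{1,o}((a,y),(x,y′)) ) (inner sum taken with multiplicity) converges absolutely and equals β·H(μ̄^{1,o} ‖ η̄₁^{1,o}). -/

import Mathlib

open scoped BigOperators ENNReal Classical

noncomputable section

/-- Depth-1 rooted marked trees: the root mark together with the multiset of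
(vertex mark, edge mark toward the root, edge mark at the root) triples of the
neighbors of the root. -/
abbrev T1 (𝒳 𝒴 : Type) : Type := 𝒳 × Multiset (𝒳 × 𝒴 × 𝒴)

section Defs

variable {𝒳 𝒴 : Type} [Fintype 𝒳] [Fintype 𝒴] [DecidableEq 𝒳] [DecidableEq 𝒴]

/-- Degree of the root of a depth-1 tree. -/
def deg (τ : T1 𝒳 𝒴) : ℕ := Multiset.card τ.2

/-- Symmetrized edge-mark distribution `ξ̄(y, y') = (ξ(y, y') + ξ(y', y)) / 2`. -/
def xiBar (ξ : 𝒴 × 𝒴 → ℝ) (y y' : 𝒴) : ℝ := (ξ (y, y') + ξ (y', y)) / 2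

/-- Multinomial coefficient `card m ! / ∏ₛ (multiplicity of s in m)!`. -/
def ordCoeff (m : Multiset (𝒳 × 𝒴 × 𝒴)) : ℝ :=
  (Nat.factorial (Multiset.card m) : ℝ) /
    ∏ s ∈ m.toFinset, (Nat.factorial (m.count s) : ℝ)

/-- The law `η₁` on `T1` with root-degree distribution `Q` and i.i.d. marks:
`η₁ (x, m) = ν x · Q (card m) · (card m)!/∏ₛ count s !· ∏_{(a,y,y') ∈ m} ν a · ξ̄ y y'`. -/
def eta1 (ν : 𝒳 → ℝ) (ξ : 𝒴 × 𝒴 → ℝ) (Q : ℕ → ℝ) (τ : T1 𝒳 𝒴) : ℝ :=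
  ν τ.1 * Q (Multiset.card τ.2) * ordCoeff τ.2 *
    (τ.2.map fun p => ν p.1 * xiBar ξ p.2.1 p.2.2).prod

/-- Mean root degree `β = ∑_τ μ τ · deg τ`. -/
def meanDeg (μ : T1 𝒳 𝒴 → ℝ) : ℝ := ∑' τ : T1 𝒳 𝒴, μ τ * (deg τ : ℝ)

/-- The neighbor–root marginal `μ̄^{1,o}`:
`μ̄^{1,o} ((a,y), (b,y')) = (1/β) ∑_{m} μ (b, m) · (multiplicity of (a,y,y') in m)`. -/
def nbrRoot (μ : T1 𝒳 𝒴 → ℝ) (p : (𝒳 × 𝒴) × (𝒳 × 𝒴)) : ℝ :=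
  (1 / meanDeg μ) *
    ∑' m : Multiset (𝒳 × 𝒴 × 𝒴), μ (p.2.1, m) * (m.count (p.1.1, p.1.2, p.2.2) : ℝ)

/-- First marginal `μ̄¹` of `μ̄^{1,o}`. -/
def marg1 (μ : T1 𝒳 𝒴 → ℝ) (u : 𝒳 × 𝒴) : ℝ := ∑ v : 𝒳 × 𝒴, nbrRoot μ (u, v)

/-- Second marginal `μ̄ᵒ` of `μ̄^{1,o}`. -/
def margO (μ : T1 𝒳 𝒴 → ℝ) (v : 𝒳 × 𝒴) : ℝ := ∑ u : 𝒳 × 𝒴, nbrRoot μ (u, v)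

/-- Conditional law `μ̄^{1|o} (u | v) = μ̄^{1,o}(u,v) / μ̄ᵒ(v)` (and `0` if `μ̄ᵒ(v) = 0`). -/
def condNbr (μ : T1 𝒳 𝒴 → ℝ) (u v : 𝒳 × 𝒴) : ℝ :=
  if 0 < margO μ v then nbrRoot μ (u, v) / margO μ v else 0

/-- `μ̌ (x, m) = η₁ (x, m) · ∏_{(a,y,y') ∈ m} μ̄¹(a,y) / η̄₁¹(a,y)` (product with
multiplicity; in Lean a ratio with zero denominator is `0`). -/
def muCheck (ν : 𝒳 → ℝ) (ξ : 𝒴 × 𝒴 → ℝ) (Q : ℕ → ℝ) (μ : T1 𝒳 𝒴 → ℝ) (τ : T1 𝒳 𝒴) : ℝ :=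
  eta1 ν ξ Q τ *
    (τ.2.map fun p => marg1 μ (p.1, p.2.1) / marg1 (eta1 ν ξ Q) (p.1, p.2.1)).prod

/-- `μ̂ (x, m) = η₁ (x, m) · ∏_{(a,y,y') ∈ m} μ̄^{1|o}((a,y)|(x,y')) / η̄₁^{1|o}((a,y)|(x,y'))`
(product with multiplicity; a ratio with zero denominator is `0`). -/
def muHat (ν : 𝒳 → ℝ) (ξ : 𝒴 × 𝒴 → ℝ) (Q : ℕ → ℝ) (μ : T1 𝒳 𝒴 → ℝ) (τ : T1 𝒳 𝒴) : ℝ :=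
  eta1 ν ξ Q τ *
    (τ.2.map fun p =>
      condNbr μ (p.1, p.2.1) (τ.1, p.2.2) /
        condNbr (eta1 ν ξ Q) (p.1, p.2.1) (τ.1, p.2.2)).prod

end Defs

/-- Relative entropy `H(p ‖ q) = ∑ₛ p s * log (p s / q s)` of probability mass
functions, with value `∞` when `p` is not absolutely continuous with respect to `q`
(or the defining series diverges); `0·log 0 = 0` is automatic since `Real.log 0 = 0`. -/
def relEnt {S : Type*} (p q : S → ℝ) : ℝ≥0∞ :=
  if (∀ s, q s = 0 → p s = 0) ∧ Summable (fun s => p s * Real.log (p s / q s)) then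
    ENNReal.ofReal (∑' s, p s * Real.log (p s / q s))
  else ⊤

/-- **Size-biased representation of `β·H(μ̄^{1,o} ‖ η̄₁^{1,o})` (Lemma 5.3).**
If `μ` is a pmf on `T1` with mean degree `β ∈ (0, ∞)`, `η₁` is the law with degree
distribution `Q` and i.i.d. marks, and `μ ≪ η₁`, then the double series
`∑_{(x,m)} μ (x,m) · ∑_{(a,y,y') ∈ m} log (μ̄^{1,o}((a,y),(x,y')) / η̄₁^{1,o}((a,y),(x,y')))`
converges absolutely and equals `β · H(μ̄^{1,o} ‖ η̄₁^{1,o})`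
`= β · ∑_p μ̄^{1,o} p · log (μ̄^{1,o} p / η̄₁^{1,o} p)`. -/
theorem sizeBiased_representation_relEnt
    {𝒳 𝒴 : Type} [Fintype 𝒳] [Fintype 𝒴] [DecidableEq 𝒳] [DecidableEq 𝒴]
    (ν : 𝒳 → ℝ) (hν0 : ∀ x, 0 ≤ ν x) (hν1 : ∑ x, ν x = 1)
    (ξ : 𝒴 × 𝒴 → ℝ) (hξ0 : ∀ p, 0 ≤ ξ p) (hξ1 : ∑ p : 𝒴 × 𝒴, ξ p = 1)
    (Q : ℕ → ℝ) (hQ0 : ∀ k, 0 ≤ Q k) (hQ1 : HasSum Q 1)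
    (hQm : Summable fun k : ℕ => (k : ℝ) * Q k)
    (hQpos : 0 < ∑' k : ℕ, (k : ℝ) * Q k)
    (μ : T1 𝒳 𝒴 → ℝ) (hμ0 : ∀ τ, 0 ≤ μ τ) (hμ1 : HasSum μ 1)
    (hβfin : Summable fun τ : T1 𝒳 𝒴 => μ τ * (deg τ : ℝ))
    (hβpos : 0 < meanDeg μ)
    (habs : ∀ τ, eta1 ν ξ Q τ = 0 → μ τ = 0) :
    (Summable fun τ : T1 𝒳 𝒴 =>
        |μ τ * (τ.2.map fun p =>
            Real.log (nbrRoot μ ((p.1, p.2.1), (τ.1, p.2.2)) /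
              nbrRoot (eta1 ν ξ Q) ((p.1, p.2.1), (τ.1, p.2.2)))).sum|) ∧
      (∑' τ : T1 𝒳 𝒴,
          μ τ * (τ.2.map fun p =>
            Real.log (nbrRoot μ ((p.1, p.2.1), (τ.1, p.2.2)) /
              nbrRoot (eta1 ν ξ Q) ((p.1, p.2.1), (τ.1, p.2.2)))).sum) =
        meanDeg μ *
          ∑ p : (𝒳 × 𝒴) × (𝒳 × 𝒴),
            nbrRoot μ p * Real.log (nbrRoot μ p / nbrRoot (eta1 ν ξ Q) p) := by
  set L : (𝒳 × 𝒴) × (𝒳 × 𝒴) → ℝ := fun p =>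
    Real.log (nbrRoot μ p / nbrRoot (eta1 ν ξ Q) p) with hL
  have hinner : ∀ τ : T1 𝒳 𝒴, (τ.2.map fun p => L ((p.1, p.2.1), (τ.1, p.2.2))).sum =
      ∑ s : 𝒳 × 𝒴 × 𝒴, (τ.2.count s : ℝ) * L ((s.1, s.2.1), (τ.1, s.2.2)) := by
    intro τ
    rw [Finset.sum_multiset_map_count]
    simp only [nsmul_eq_mul]
    apply Finset.sum_subset (Finset.subset_univ _)
    intro s _ hs
    rw [Multiset.mem_toFinset] at hs
    simp [Multiset.count_eq_zero_of_notMem hs]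
  have hcount : ∀ s : 𝒳 × 𝒴 × 𝒴,
      Summable fun τ : T1 𝒳 𝒴 => μ τ * (τ.2.count s : ℝ) := by
    intro s
    refine Summable.of_nonneg_of_le (fun τ => mul_nonneg (hμ0 τ) (Nat.cast_nonneg _))
      (fun τ => ?_) hβfin
    exact mul_le_mul_of_nonneg_left (Nat.cast_le.2 (Multiset.count_le_card s τ.2)) (hμ0 τ)
  have hfib : ∀ (x : 𝒳) (s : 𝒳 × 𝒴 × 𝒴),
      Summable fun m : Multiset (𝒳 × 𝒴 × 𝒴) => μ (x, m) * (m.count s : ℝ) := by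
    intro x s
    exact (hcount s).comp_injective (Prod.mk_right_injective x)
  have habsS : Summable fun τ : T1 𝒳 𝒴 =>
      |μ τ * (τ.2.map fun p => L ((p.1, p.2.1), (τ.1, p.2.2))).sum| := by
    set C : ℝ := ∑ q, |L q| with hC
    have hLC : ∀ q, |L q| ≤ C := fun q =>
      Finset.single_le_sum (f := fun q => |L q|) (fun i _ => abs_nonneg _) (Finset.mem_univ q)
    have hS : Summable fun τ : T1 𝒳 𝒴 =>
        ∑ s : 𝒳 × 𝒴 × 𝒴, μ τ * (τ.2.count s : ℝ) * C :=
      summable_sum fun s _ => (hcount s).mul_right C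
    refine Summable.of_nonneg_of_le (fun τ => abs_nonneg _) (fun τ => ?_) hS
    rw [hinner, Finset.mul_sum]
    refine (Finset.abs_sum_le_sum_abs _ _).trans (Finset.sum_le_sum fun s _ => ?_)
    rw [abs_mul, abs_mul, abs_of_nonneg (hμ0 τ), Nat.abs_cast, ← mul_assoc]
    exact mul_le_mul_of_nonneg_left (hLC _) (mul_nonneg (hμ0 τ) (Nat.cast_nonneg _))
  refine ⟨habsS, ?_⟩
  have hS := habsS.of_abs
  change (∑' τ : T1 𝒳 𝒴, μ τ * (τ.2.map fun p => L ((p.1, p.2.1), (τ.1, p.2.2))).sum) =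
    meanDeg μ * ∑ p, nbrRoot μ p * L p
  rw [hS.tsum_prod, tsum_fintype]
  have hx : ∀ x : 𝒳, (∑' m : Multiset (𝒳 × 𝒴 × 𝒴),
      μ (x, m) * (m.map fun p => L ((p.1, p.2.1), (x, p.2.2))).sum) =
      ∑ s : 𝒳 × 𝒴 × 𝒴, meanDeg μ * (nbrRoot μ ((s.1, s.2.1), (x, s.2.2)) *
        L ((s.1, s.2.1), (x, s.2.2))) := by
    intro x
    have h1 : ∀ m : Multiset (𝒳 × 𝒴 × 𝒴),
        μ (x, m) * (m.map fun p => L ((p.1, p.2.1), (x, p.2.2))).sum =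
        ∑ s : 𝒳 × 𝒴 × 𝒴, μ (x, m) * (m.count s : ℝ) * L ((s.1, s.2.1), (x, s.2.2)) := by
      intro m
      have h2 := hinner (x, m)
      simp only at h2
      rw [h2, Finset.mul_sum]
      simp only [mul_assoc]
    simp only [h1]
    rw [Summable.tsum_finsetSum fun s _ => (hfib x s).mul_right _]
    refine Finset.sum_congr rfl fun s _ => ?_
    rw [tsum_mul_right]
    simp only [nbrRoot]
    field_simp
  simp only [hx]
  rw [Finset.mul_sum]
  simp only [Fintype.sum_prod_type]
  rw [Finset.sum_comm]
  refine Finset.sum_congr rfl fun a _ => ?_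
  rw [Finset.sum_comm]
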